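/- Let q be a prime power with q > 2 and let S be an algebraic hypersurface of PG(6,q^2) of degree q+1 defined over GF(q^2), not containing any solid, with exactly q^11 + q^9 + q^7 + q^4 + q^2 + 1 rational points. If Sigma_3 is a solid of PG(6,q^2) meeting S in exactly q^4 + q^2 + 1 rational points, then the intersection S ∩ Sigma_3 is a plane (a 2-dimensional projective subspace) of PG(6,q^2). -/

import Mathlib

open MvPolynomial Module

/-- The set of points of the projective subspace of `PG(n-1, F)` determined by
the linear subspace `W` of `F^n`. -/
def projPts {F : Type} [Field F] {n : ℕ} (W : Submodule F (Fin n → F)) :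
    Set (Projectivization F (Fin n → F)) :=
  {P | P.submodule ≤ W}

/-- The set of `F`-rational points of the hypersurface of `PG(n-1, F)` defined by the
homogeneous polynomial `f`. -/
def hypersurfacePts {F : Type} [Field F] {n : ℕ} (f : MvPolynomial (Fin n) F) :
    Set (Projectivization F (Fin n → F)) :=
  {P | MvPolynomial.eval P.rep f = 0}

/-!
Suppose that a line of `Σ₃` contains no rational point of `S`. A plane through it which does not lie
in `Σ₃` meets `S` in fewer than `q ^ 3` points: if the section is irreducible, the Stöhr–Voloch
argument intersects it with its Frobenius polar curve, whose degree is `q ^ 2 + q`; if it is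
reducible, each component has no point on the line and a pencil of lines suffices. Averaging over
the planes through the line contradicts the number of points of `S` outside `Σ₃`. Hence `S` blocks
every line of `Σ₃`, and by the theorem of Bose and Burton a set of `q ^ 4 + q ^ 2 + 1` points of a
solid that blocks every line is a plane.
-/

section LineRestriction

variable {σ F : Type*} [CommSemiring F]

/-- The pull-back of polynomial functions on `F^σ` to the parametrised line `s ↦ c + s • v`. -/
noncomputable def lineRestriction (c v : σ → F) : MvPolynomial σ F →ₐ[F] Polynomial F :=
  aeval fun i => Polynomial.C (c i) + Polynomial.C (v i) * Polynomial.X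

@[simp]
lemma lineRestriction_X (c v : σ → F) (i : σ) :
    lineRestriction c v (X i) = Polynomial.C (c i) + Polynomial.C (v i) * Polynomial.X :=
  aeval_X _ _

@[simp]
lemma eval_lineRestriction (c v : σ → F) (p : MvPolynomial σ F) (s : F) :
    (lineRestriction c v p).eval s = eval (c + s • v) p := by
  have : (Polynomial.aeval s).comp (lineRestriction c v) = aeval (c + s • v) := by
    ext i
    simp [mul_comm s]
  simpa using DFunLike.congr_fun this p

lemma natDegree_C_add_C_mul_X_le (a b : F) :
    (Polynomial.C a + Polynomial.C b * Polynomial.X).natDegree ≤ 1 := by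
  compute_degree

lemma natDegree_lineRestriction_le (c v : σ → F) {p : MvPolynomial σ F} {d : ℕ}
    (hp : p.totalDegree ≤ d) : (lineRestriction c v p).natDegree ≤ d := by
  simpa [lineRestriction] using
    aeval_natDegree_le (n := 1) p hp _ fun i => natDegree_C_add_C_mul_X_le (c i) (v i)

lemma coeff_lineRestriction_monomial (c v : σ → F) (m : σ →₀ ℕ) (a : F) :
    (lineRestriction c v (monomial m a)).coeff m.degree = eval v (monomial m a) := by
  have h := Polynomial.coeff_multiset_prod_of_natDegree_le
    (m.toMultiset.map fun i => lineRestriction c v (X i)) 1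
    (by simpa using fun i _ => natDegree_C_add_C_mul_X_le (c i) (v i))
  have hcard : (m.toMultiset.map fun i => lineRestriction c v (X i)).card = m.degree := by
    rw [Multiset.card_map, Finsupp.card_toMultiset]
    rfl
  rw [hcard, mul_one] at h
  simpa [Finsupp.toMultiset_map, Finsupp.prod_toMultiset, Finsupp.prod_mapDomain_index, pow_add,
    lineRestriction, aeval_monomial, eval_monomial] using congrArg (a * ·) h

/-- The top coefficient of the restriction to a line is the value at its point at infinity. -/
lemma coeff_lineRestriction (c v : σ → F) {f : MvPolynomial σ F} {d : ℕ}
    (hf : f.IsHomogeneous d) : (lineRestriction c v f).coeff d = eval v f := by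
  rw [f.as_sum, map_sum, map_sum, Polynomial.finsetSum_coeff]
  refine Finset.sum_congr rfl fun m hm => ?_
  rw [hf.degree_eq_sum_deg_support hm]
  exact coeff_lineRestriction_monomial c v m _

lemma eval_smul_of_isHomogeneous {f : MvPolynomial σ F} {d : ℕ} (hf : f.IsHomogeneous d)
    (a : F) (v : σ → F) : eval (a • v) f = a ^ d * eval v f := by
  rw [eval_eq, eval_eq, Finset.mul_sum]
  refine Finset.sum_congr rfl fun m hm => ?_
  rw [hf.degree_eq_sum_deg_support hm, ← Finset.prod_pow_eq_pow_sum, mul_left_comm,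
    ← Finset.prod_mul_distrib]
  simp only [Pi.smul_apply, smul_eq_mul, mul_pow]

lemma derivative_lineRestriction [Fintype σ] (c v : σ → F) (p : MvPolynomial σ F) :
    Polynomial.derivative (lineRestriction c v p) =
      ∑ i, Polynomial.C (v i) * lineRestriction c v (pderiv i p) := by
  classical
  induction p using MvPolynomial.induction_on with
  | C a => simp [lineRestriction]
  | add p q hp hq => simp [hp, hq, mul_add, Finset.sum_add_distrib]
  | mul_X p j hp =>
    have hX : ∑ i, Polynomial.C (v i) * lineRestriction c v (pderiv i (X j)) =
        Polynomial.derivative (lineRestriction c v (X j)) := by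
      simp [pderiv_X, Pi.single_apply, apply_ite]
    simp only [map_mul, Polynomial.derivative_mul, hp, ← hX, pderiv_mul, map_add, mul_add,
      Finset.sum_add_distrib, Finset.sum_mul, Finset.mul_sum, mul_assoc, mul_left_comm]

end LineRestriction

section FiniteField

variable {F : Type*} [Field F] [Fintype F]

lemma X_pow_card_sub_X_eq_prod :
    (Polynomial.X ^ Fintype.card F - Polynomial.X : Polynomial F) =
      ∏ a, (Polynomial.X - Polynomial.C a) := by
  have hsplits : (Polynomial.X ^ Fintype.card F - Polynomial.X : Polynomial F).Splits :=
    Fintype.card_eq_nat_card (α := F) ▸ Polynomial.splits_X_pow_nat_card_sub_X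
  have hmonic := Polynomial.monic_X_pow_sub (p := (Polynomial.X : Polynomial F))
    (n := Fintype.card F) (by simpa using Fintype.one_lt_card)
  rw [hsplits.eq_prod_roots_of_monic hmonic, FiniteField.roots_X_pow_card_sub_X]
  rfl

lemma isCoprime_X_pow_card_sub_X {u : Polynomial F} (hu : ∀ a, u.eval a ≠ 0) :
    IsCoprime u (Polynomial.X ^ Fintype.card F - Polynomial.X) := by
  rw [X_pow_card_sub_X_eq_prod]
  refine IsCoprime.prod_right fun a _ => ?_
  exact ((Polynomial.irreducible_X_sub_C a).coprime_iff_not_dvd.mpr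
    (mt Polynomial.dvd_iff_isRoot.mp (hu a))).symm

end FiniteField

section FrobeniusPolar

variable {σ F : Type*} [Field F] [Fintype σ]

/-- The Stöhr–Voloch polynomial `∑ i, X i ^ Q * ∂f/∂X i`. Over a field with `Q` elements it vanishes
at `x` if and only if the tangent space of `f = 0` at `x` contains the Frobenius image of `x`. -/
noncomputable def frobeniusPolar (Q : ℕ) (f : MvPolynomial σ F) : MvPolynomial σ F :=
  ∑ i, X i ^ Q * pderiv i f

lemma isHomogeneous_frobeniusPolar (Q : ℕ) {f : MvPolynomial σ F} {d : ℕ}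
    (hf : f.IsHomogeneous d) : (frobeniusPolar Q f).IsHomogeneous (Q + (d - 1)) :=
  IsHomogeneous.sum _ _ _ fun i _ => (isHomogeneous_X_pow i Q).mul hf.pderiv

variable [Fintype F]

/-- Frobenius raises `c i + v i * X` to `c i + v i * X ^ Q`, so on a rational line the polar differs
from Euler's `∑ i, X i * ∂f/∂X i` only by a multiple of `X ^ Q - X`. -/
lemma lineRestriction_frobeniusPolar (c v : σ → F) {f : MvPolynomial σ F} {d : ℕ}
    (hf : f.IsHomogeneous d) :
    lineRestriction c v (frobeniusPolar (Fintype.card F) f) = d • lineRestriction c v f +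
      (Polynomial.X ^ Fintype.card F - Polynomial.X) *
        Polynomial.derivative (lineRestriction c v f) := by
  have frobenius (i : σ) : lineRestriction c v (X i) ^ Fintype.card F = lineRestriction c v (X i) +
      (Polynomial.X ^ Fintype.card F - Polynomial.X) * Polynomial.C (v i) := by
    rw [← FiniteField.expand_card, lineRestriction_X]
    simp only [map_add, map_mul, Polynomial.expand_C, Polynomial.expand_X]
    ring
  simp only [frobeniusPolar, map_sum, map_mul, map_pow, frobenius, derivative_lineRestriction,
    ← map_nsmul, ← hf.sum_X_mul_pderiv, Finset.mul_sum, ← Finset.sum_add_distrib]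
  exact Finset.sum_congr rfl fun i _ => by ring

lemma X_sq_dvd_lineRestriction_frobeniusPolar (c v : σ → F) {f : MvPolynomial σ F} {d : ℕ}
    (hf : f.IsHomogeneous d) (h : Polynomial.X ^ 2 ∣ lineRestriction c v f) :
    Polynomial.X ^ 2 ∣ lineRestriction c v (frobeniusPolar (Fintype.card F) f) := by
  rw [lineRestriction_frobeniusPolar c v hf]
  refine dvd_add (dvd_nsmul_of_dvd d h) ?_
  rw [sq]
  refine mul_dvd_mul ?_ ?_
  · exact dvd_sub (dvd_pow_self _ Fintype.card_ne_zero) dvd_rfl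
  · obtain ⟨u, hu⟩ := h
    simp [hu, Polynomial.derivative_mul, Polynomial.X_dvd_iff]

lemma not_dvd_frobeniusPolar {f : MvPolynomial σ F} {d : ℕ} (hf : f.IsHomogeneous d)
    (hd : (d : F) ≠ 0) {c v : σ → F} (hv : eval v f ≠ 0) (hc : ∀ s : F, eval (c + s • v) f ≠ 0) :
    ¬ f ∣ frobeniusPolar (Fintype.card F) f := by
  intro hdvd
  set u := lineRestriction c v f
  have hcoeff : u.coeff d ≠ 0 := by rwa [coeff_lineRestriction c v hf]
  have hdvd_derivative : u ∣ Polynomial.derivative u := by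
    have h := map_dvd (lineRestriction c v) hdvd
    rw [lineRestriction_frobeniusPolar c v hf, dvd_add_right (dvd_nsmul_of_dvd d dvd_rfl)] at h
    exact (isCoprime_X_pow_card_sub_X fun a => by simpa [u] using hc a).dvd_of_dvd_mul_left h
  have hdpos : 1 ≤ d := by
    rw [Nat.one_le_iff_ne_zero]
    rintro rfl
    simp at hd
  have hderivative : Polynomial.derivative u = 0 := by
    refine Polynomial.eq_zero_of_dvd_of_natDegree_lt hdvd_derivative ?_
    refine Polynomial.natDegree_derivative_lt fun h => ?_
    exact hcoeff (Polynomial.coeff_eq_zero_of_natDegree_lt (by omega))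
  have h := congrArg (Polynomial.coeff · (d - 1)) hderivative
  simp only [Polynomial.coeff_derivative, Nat.sub_add_cancel hdpos, Polynomial.coeff_zero,
    ← Nat.cast_add_one] at h
  exact mul_ne_zero hcoeff hd h

end FrobeniusPolar

section Bezout

variable {σ F : Type*} [Field F]

lemma finrank_homogeneousSubmodule [Fintype σ] (k : ℕ) :
    finrank F (homogeneousSubmodule σ F k) = (Fintype.card σ).multichoose k := by
  classical
  rw [homogeneousSubmodule_eq_finsupp_supported]
  refine (finrank_eq_nat_card_basis
    (basisRestrictSupport F {m : σ →₀ ℕ | m.degree = k})).trans ?_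
  have h : {m : σ →₀ ℕ | m.degree = k} = (Finset.univ.finsuppAntidiag k : Finset (σ →₀ ℕ)) := by
    ext m
    simp [Finsupp.degree_eq_sum]
  rw [h, ← Finset.card_univ, ← Finset.card_finsuppAntidiag_nat_eq_multichoose]
  exact Nat.card_eq_card_toFinset _ |>.trans (by simp)

lemma two_mul_finrank_homogeneousSubmodule_fin_three (k : ℕ) :
    2 * finrank F (homogeneousSubmodule (Fin 3) F k) = (k + 1) * (k + 2) := by
  have h := Nat.descFactorial_eq_factorial_mul_choose (k + 2) 2
  rw [finrank_homogeneousSubmodule, Fintype.card_fin, Nat.multichoose_eq,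
    show 3 + k - 1 = k + 2 by omega, Nat.choose_symm_add]
  simpa [Nat.descFactorial, mul_comm] using h.symm

instance finiteDimensional_homogeneousSubmodule [Finite σ] (k : ℕ) :
    FiniteDimensional F (homogeneousSubmodule σ F k) :=
  Module.Finite.iff_fg.mpr (homogeneousSubmodule_fg σ F k)

attribute [local instance] MvPolynomial.gradedAlgebra in
lemma mem_map_mulLeft_homogeneousSubmodule_of_dvd {f p : MvPolynomial σ F} {i j : ℕ}
    (hf : f.IsHomogeneous i) (hp : p.IsHomogeneous (i + j)) (h : f ∣ p) :
    p ∈ (homogeneousSubmodule σ F j).map (LinearMap.mulLeft F f) := by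
  obtain ⟨c, rfl⟩ := h
  have h := DirectSum.coe_decompose_mul_add_of_left_mem (homogeneousSubmodule σ F) (b := c) (j := j)
    ((mem_homogeneousSubmodule _ _).mpr hf)
  rw [DirectSum.decompose_of_mem_same _ ((mem_homogeneousSubmodule _ _).mpr hp)] at h
  exact ⟨_, SetLike.coe_mem _, h.symm⟩

lemma map_mulLeft_homogeneousSubmodule_le {f : MvPolynomial σ F} {i : ℕ} (hf : f.IsHomogeneous i)
    (j : ℕ) : (homogeneousSubmodule σ F j).map (LinearMap.mulLeft F f) ≤
      homogeneousSubmodule σ F (i + j) := by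
  rintro _ ⟨p, hp, rfl⟩
  exact hf.mul hp

lemma finrank_map_mulLeft {f : MvPolynomial σ F} (hf : f ≠ 0)
    (V : Submodule F (MvPolynomial σ F)) :
    finrank F (V.map (LinearMap.mulLeft F f)) = finrank F V :=
  (V.equivMapOfInjective _ ((mul_right_injective₀ hf))).finrank_eq.symm

lemma exists_map_homogeneousSubmodule_eq_top {A : Type*} [CommRing A] [Algebra F A]
    [FiniteDimensional F A] {φ : MvPolynomial σ F →ₐ[F] A} (hφ : Function.Surjective φ) {i : σ}
    (hi : φ (X i) = 1) :
    ∃ m, ∀ k, m ≤ k → (homogeneousSubmodule σ F k).map φ.toLinearMap = ⊤ := by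
  let B : ℕ →o Submodule F A :=
    ⟨fun k => (homogeneousSubmodule σ F k).map φ.toLinearMap, monotone_nat_of_le_succ fun k => by
      rintro _ ⟨p, hp, rfl⟩
      exact ⟨p * X i, hp.mul (isHomogeneous_X F i), by simp [hi]⟩⟩
  have hB : ⨆ k, B k = ⊤ := by
    rw [← LinearMap.range_eq_top (f := φ.toLinearMap).mpr hφ, ← Submodule.map_top,
      ← (MvPolynomial.decomposition.isInternal).submodule_iSup_eq_top, Submodule.map_iSup]
    rfl
  refine ⟨monotonicSequenceLimitIndex B, fun k hk => top_le_iff.mp ?_⟩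
  rw [← hB, WellFoundedGT.iSup_eq_monotonicSequenceLimit]
  exact B.monotone hk

/-- Bézout's theorem: two plane curves of degrees `d` and `e` without common component meet in a
scheme of length at most `d * e`, here the spectrum of `A`; the line `X 0 = 0` does not meet it. -/
lemma finrank_le_mul_of_isRelPrime {f g : MvPolynomial (Fin 3) F} {d e : ℕ}
    (hf : f.IsHomogeneous d) (hg : g.IsHomogeneous e) (hf0 : f ≠ 0) (hg0 : g ≠ 0)
    (hfg : IsRelPrime f g) {A : Type*} [CommRing A] [Algebra F A] [FiniteDimensional F A]
    {φ : MvPolynomial (Fin 3) F →ₐ[F] A} (hφ : Function.Surjective φ) (hX : φ (X 0) = 1)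
    (hφf : φ f = 0) (hφg : φ g = 0) : finrank F A ≤ d * e := by
  obtain ⟨m, hm⟩ := exists_map_homogeneousSubmodule_eq_top hφ hX
  let H := homogeneousSubmodule (Fin 3) F
  let P := (H (e + m)).map (LinearMap.mulLeft F f)
  let R := (H (d + m)).map (LinearMap.mulLeft F g)
  let φk := φ.toLinearMap.domRestrict (H (d + (e + m)))
  have hP : P ≤ H (d + (e + m)) := map_mulLeft_homogeneousSubmodule_le hf _
  have hR : R ≤ H (d + (e + m)) := by
    simpa only [add_left_comm] using map_mulLeft_homogeneousSubmodule_le hg (d + m)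
  have hinf : P ⊓ R ≤ (H m).map (LinearMap.mulLeft F (f * g)) := by
    rintro _ ⟨⟨a, ha, rfl⟩, ⟨b, -, hab⟩⟩
    refine mem_map_mulLeft_homogeneousSubmodule_of_dvd (hf.mul hg) ?_ ?_
    · exact add_assoc d e m ▸ hf.mul ha
    · exact hfg.mul_dvd (dvd_mul_right f a) ⟨b, hab.symm⟩
  have hker : P ⊔ R ≤ (LinearMap.ker φk).map (H (d + (e + m))).subtype := by
    refine sup_le (fun p hp => ⟨⟨p, hP hp⟩, ?_, rfl⟩) (fun p hp => ⟨⟨p, hR hp⟩, ?_, rfl⟩)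
    · obtain ⟨a, -, rfl⟩ := hp
      simp [φk, hφf]
    · obtain ⟨a, -, rfl⟩ := hp
      simp [φk, hφg]
  have hrange : finrank F (LinearMap.range φk) = finrank F A := by
    rw [LinearMap.range_domRestrict, hm _ (by omega), finrank_top]
  have rank_nullity := LinearMap.finrank_range_add_finrank_ker φk
  have hsum := Submodule.finrank_sup_add_finrank_inf_eq P R
  have hker_le := Submodule.finrank_mono hker
  have hinf_le := Submodule.finrank_mono hinf
  rw [Submodule.finrank_map_subtype_eq] at hker_le
  rw [finrank_map_mulLeft hf0, finrank_map_mulLeft hg0] at hsum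
  rw [finrank_map_mulLeft (mul_ne_zero hf0 hg0)] at hinf_le
  have dim_H := two_mul_finrank_homogeneousSubmodule_fin_three (F := F)
  nlinarith [dim_H (d + (e + m)), dim_H (e + m), dim_H (d + m), dim_H m]

end Bezout

section TangentJets

variable {σ F : Type*} [Field F]

lemma lineRestriction_surjective (c : σ → F) {v : σ → F} (hv : v ≠ 0) :
    Function.Surjective (lineRestriction c v) := by
  obtain ⟨i, hi⟩ := Function.ne_iff.mp hv
  rw [← AlgHom.range_eq_top, ← top_le_iff, ← Polynomial.adjoin_X, Algebra.adjoin_le_iff,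
    Set.singleton_subset_iff]
  refine ⟨C (v i)⁻¹ * (X i - C (c i)), ?_⟩
  have hC (a : F) : lineRestriction c v (C a) = Polynomial.C a := (lineRestriction c v).commutes a
  change lineRestriction c v _ = _
  rw [map_mul, map_sub, lineRestriction_X, hC, hC, add_sub_cancel_left, ← mul_assoc,
    ← Polynomial.C_mul, inv_mul_cancel₀ hi, Polynomial.C_1, one_mul]

/-- The first-order jet at `c` in the direction `v`, that is `p(c + v ε)` in the dual numbers: the
value of `p` at `c` together with its derivative along `v`. -/
noncomputable def tangentJet (c v : σ → F) : MvPolynomial σ F →ₐ[F] DualNumber F :=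
  (Polynomial.aeval DualNumber.eps).comp (lineRestriction c v)

lemma tangentJet_eq_zero {c v : σ → F} {p : MvPolynomial σ F}
    (h : Polynomial.X ^ 2 ∣ lineRestriction c v p) : tangentJet c v p = 0 := by
  obtain ⟨u, hu⟩ := h
  simp [tangentJet, hu]

lemma tangentJet_surjective (c : σ → F) {v : σ → F} (hv : v ≠ 0) :
    Function.Surjective (tangentJet c v) := by
  intro z
  obtain ⟨p, hp⟩ := lineRestriction_surjective c hv
    (Polynomial.C z.fst + Polynomial.C z.snd * Polynomial.X)
  refine ⟨p, ?_⟩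
  rw [tangentJet, AlgHom.comp_apply, hp]
  ext <;> simp [TrivSqZeroExt.algebraMap_eq_inl]

lemma isCoprime_ker_tangentJet {c c' : σ → F} (hc : c ≠ c') (v v' : σ → F) :
    IsCoprime (RingHom.ker (tangentJet c v)) (RingHom.ker (tangentJet c' v')) := by
  obtain ⟨i, hi⟩ := Function.ne_iff.mp hc
  have mem_ker (a w : σ → F) : (X i - C (a i)) ^ 2 ∈ RingHom.ker (tangentJet a w) := by
    have hC : lineRestriction a w (C (a i)) = Polynomial.C (a i) := (lineRestriction a w).commutes _
    refine RingHom.mem_ker.mpr (tangentJet_eq_zero ?_)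
    rw [map_pow, map_sub, lineRestriction_X, hC, add_sub_cancel_left, mul_pow]
    exact dvd_mul_left _ _
  have hcoprime : IsCoprime (X i - C (c i)) (X i - C (c' i) : MvPolynomial σ F) := by
    refine ⟨-C (c i - c' i)⁻¹, C (c i - c' i)⁻¹, ?_⟩
    have : (C (c i - c' i)⁻¹ * C (c i - c' i) : MvPolynomial σ F) = 1 := by
      rw [← C_mul, inv_mul_cancel₀ (sub_ne_zero.mpr hi), C_1]
    rw [C_sub] at this
    linear_combination this
  obtain ⟨a, b, hab⟩ := hcoprime.pow (m := 2) (n := 2)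
  exact Ideal.isCoprime_iff_exists.mpr ⟨_, Ideal.mul_mem_left _ a (mem_ker c v), _,
    Ideal.mul_mem_left _ b (mem_ker c' v'), hab⟩

lemma pi_tangentJet_surjective (Z : Finset (σ → F)) {t : (σ → F) → σ → F}
    (ht : ∀ x ∈ Z, t x ≠ 0) :
    Function.Surjective (AlgHom.pi fun x : Z => tangentJet (x : σ → F) (t x)) := by
  intro y
  choose p hp using fun x : Z => tangentJet_surjective (x : σ → F) (ht x x.2) (y x)
  obtain ⟨r, hr⟩ := Ideal.exists_forall_sub_mem_ideal
    (I := fun x : Z => RingHom.ker (tangentJet (x : σ → F) (t x)))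
    (fun _ _ hxx' => isCoprime_ker_tangentJet (Subtype.coe_ne_coe.mpr hxx') _ _) p
  refine ⟨r, funext fun x => ?_⟩
  have := RingHom.mem_ker.mp (hr x)
  rw [map_sub, sub_eq_zero] at this
  exact this.trans (hp x)

instance finiteDimensional_dualNumber : FiniteDimensional F (DualNumber F) :=
  inferInstanceAs (FiniteDimensional F (F × F))

lemma finrank_dualNumber : finrank F (DualNumber F) = 2 :=
  (finrank_prod (R := F) (M := F) (M' := F)).trans (by rw [finrank_self])

lemma exists_tangent_direction [Finite σ] {f : MvPolynomial σ F} {x : σ → F} (hx : eval x f = 0)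
    {U : Submodule F (σ → F)} (hU : 1 < finrank F U) :
    ∃ t ∈ U, t ≠ 0 ∧ Polynomial.X ^ 2 ∣ lineRestriction x t f := by
  have := Fintype.ofFinite σ
  let D : (σ → F) →ₗ[F] F := ∑ i, eval x (pderiv i f) • LinearMap.proj i
  have coeff_one (t : σ → F) : (lineRestriction x t f).coeff 1 = D t := by
    have h := Polynomial.coeff_derivative (lineRestriction x t f) 0
    rw [derivative_lineRestriction, Polynomial.coeff_zero_eq_eval_zero] at h
    simpa [D, Polynomial.eval_finsetSum, mul_comm] using h.symm
  obtain ⟨t, ht, ht0⟩ := Submodule.exists_mem_ne_zero_of_ne_bot <|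
    LinearMap.ker_ne_bot_of_finrank_lt (f := D.domRestrict U) (by simpa using hU)
  refine ⟨t, t.2, by simpa using ht0, Polynomial.X_pow_dvd_iff.mpr fun i hi => ?_⟩
  interval_cases i
  · simpa [Polynomial.coeff_zero_eq_eval_zero] using hx
  · exact (coeff_one t).trans ht

lemma finrank_ker_proj {n : ℕ} (i : Fin (n + 1)) :
    finrank F (LinearMap.ker (LinearMap.proj i : (Fin (n + 1) → F) →ₗ[F] F)) = n := by
  have h := LinearMap.finrank_range_add_finrank_ker (LinearMap.proj i : (Fin (n + 1) → F) →ₗ[F] F)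
  rw [LinearMap.range_eq_top.mpr (LinearMap.proj_surjective i), finrank_top, finrank_self,
    finrank_fin_fun] at h
  omega

variable [Fintype F]

/-- The Stöhr–Voloch argument: the curve meets its polar curve doubly at every rational point. -/
lemma two_mul_card_le_of_irreducible {f : MvPolynomial (Fin 3) F} {d : ℕ} (hf : f.IsHomogeneous d)
    (hirr : Irreducible f) (hd : (d : F) ≠ 0) (hinf : ∀ v ≠ 0, v 0 = 0 → eval v f ≠ 0)
    (Z : Finset (Fin 3 → F)) (hZ : ∀ x ∈ Z, x 0 = 1 ∧ eval x f = 0) :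
    2 * Z.card ≤ d * (Fintype.card F + (d - 1)) := by
  have hU : 1 < finrank F (LinearMap.ker (LinearMap.proj 0 : (Fin 3 → F) →ₗ[F] F)) := by
    rw [finrank_ker_proj]
    exact one_lt_two
  choose! t htU ht0 ht using fun x hx => exists_tangent_direction (hZ x hx).2 hU
  have hndvd : ¬ f ∣ frobeniusPolar (Fintype.card F) f := by
    refine not_dvd_frobeniusPolar hf hd (c := ![0, 0, 1]) (v := ![0, 1, 0])
      (hinf _ (by simp) (by simp)) fun s => hinf _ (by simp) (by simp)
  have finrank_jets : finrank F (Z → DualNumber F) = 2 * Z.card := by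
    simp [finrank_pi_fintype, finrank_dualNumber, mul_comm]
  rw [← finrank_jets]
  refine finrank_le_mul_of_isRelPrime hf (isHomogeneous_frobeniusPolar (Fintype.card F) hf)
    hirr.ne_zero (fun h => hndvd (h ▸ dvd_zero f)) (hirr.isRelPrime_iff_not_dvd.mpr hndvd)
    (pi_tangentJet_surjective Z ht0) (funext fun x => ?_) (funext fun x => ?_)
    (funext fun x => ?_)
  · simp [tangentJet, (hZ x x.2).1, show t x 0 = 0 from htU x x.2]
  · exact tangentJet_eq_zero (ht x x.2)
  · exact tangentJet_eq_zero (X_sq_dvd_lineRestriction_frobeniusPolar _ _ hf (ht x x.2))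

end TangentJets

section Pencil

variable {σ F : Type*} [Field F]

lemma card_zeros_line_le {p : MvPolynomial σ F} {d : ℕ} (hp : p.totalDegree ≤ d) {c v : σ → F}
    (hne : lineRestriction c v p ≠ 0) {T : Finset F} (hT : ∀ s ∈ T, eval (c + s • v) p = 0) :
    T.card ≤ d := by
  refine (Polynomial.card_le_degree_of_subset_roots fun s hs => ?_).trans
    (natDegree_lineRestriction_le c v hp)
  simpa [hne] using hT s hs

lemma totalDegree_pos_of_not_isUnit {p : MvPolynomial σ F} (hp0 : p ≠ 0)
    (hp : ¬ IsUnit p) : 0 < p.totalDegree := by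
  refine Nat.pos_iff_ne_zero.mpr fun hdeg => hp ?_
  have hC := totalDegree_eq_zero_iff_eq_C.mp hdeg
  rw [hC]
  exact (IsUnit.mk0 _ fun h => hp0 (by rw [hC, h, C_0])).map C

variable [Finite σ] [Fintype F]

/-- Every line through a zero `x` of `p` contains at most `d - 1` further zeros. -/
lemma pred_card_zeros_mul_le {p : MvPolynomial σ F} {d : ℕ} (hp : p.totalDegree ≤ d)
    {U : Submodule F (σ → F)} {Z : Finset (σ → F)} (hZ : ∀ x ∈ Z, eval x p = 0)
    (hZU : ∀ x ∈ Z, ∀ y ∈ Z, y - x ∈ U)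
    (hline : ∀ x ∈ Z, ∀ v ∈ U, v ≠ 0 → lineRestriction x v p ≠ 0) :
    (Z.card - 1) * (Fintype.card F - 1) ≤ (Fintype.card F ^ finrank F U - 1) * (d - 1) := by
  classical
  rcases Z.eq_empty_or_nonempty with rfl | ⟨x, hx⟩
  · simp
  have := Fintype.ofFinite U
  let r : F → U → Prop := fun s v => eval (x + s • (v : σ → F)) p = 0
  have scaled_zeros_le (s : F) (hs : s ∈ Finset.univ.erase (0 : F)) :
      (Z.erase x).card ≤ ((Finset.univ.erase (0 : U)).bipartiteAbove r s).card := by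
    have hs0 : s ≠ 0 := by simpa using hs
    refine Finset.card_le_card_of_surjOn (fun v => x + s • (v : σ → F)) fun y hy => ?_
    obtain ⟨hyx, hyZ⟩ := Finset.mem_erase.mp hy
    have hne : s⁻¹ • (y - x) ≠ 0 := smul_ne_zero (inv_ne_zero hs0) (sub_ne_zero.mpr hyx)
    refine ⟨⟨s⁻¹ • (y - x), U.smul_mem _ (hZU x hx y hyZ)⟩, ?_, by simp [hs0]⟩
    refine Finset.mem_coe.mpr (Finset.mem_filter.mpr ⟨?_, by simp [r, hs0, hZ y hyZ]⟩)
    exact Finset.mem_erase.mpr ⟨fun h => hne (congrArg Subtype.val h), Finset.mem_univ _⟩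
  have further_zeros_le (v : U) (hv : v ∈ Finset.univ.erase (0 : U)) :
      ((Finset.univ.erase (0 : F)).bipartiteBelow r v).card ≤ d - 1 := by
    have hv0 : (v : σ → F) ≠ 0 := by simpa using hv
    rw [Finset.bipartiteBelow, Finset.filter_erase, Finset.card_erase_of_mem (by simp [r, hZ x hx])]
    exact Nat.sub_le_sub_right (card_zeros_line_le hp (hline x hx v v.2 hv0) fun s hs => by
      simpa [r] using hs) 1
  have hcount := Finset.card_mul_le_card_mul r scaled_zeros_le further_zeros_le
  have hUcard : Fintype.card U = Fintype.card F ^ finrank F U := Module.card_eq_pow_finrank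
  simpa [Finset.card_erase_of_mem, hx, mul_comm, hUcard] using hcount

lemma card_zeros_le_of_finrank_eq_two {p : MvPolynomial σ F} {d : ℕ} (hp : p.totalDegree ≤ d)
    {U : Submodule F (σ → F)} (hU : finrank F U = 2) {Z : Finset (σ → F)}
    (hZ : ∀ x ∈ Z, eval x p = 0) (hZU : ∀ x ∈ Z, ∀ y ∈ Z, y - x ∈ U)
    (hline : ∀ x ∈ Z, ∀ v ∈ U, v ≠ 0 → lineRestriction x v p ≠ 0) :
    Z.card ≤ 1 + (Fintype.card F + 1) * (d - 1) := by
  have h := pred_card_zeros_mul_le hp hZ hZU hline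
  have hF : 0 < Fintype.card F - 1 := Nat.sub_pos_of_lt Fintype.one_lt_card
  rw [hU, show Fintype.card F ^ 2 - 1 = (Fintype.card F + 1) * (Fintype.card F - 1) by
    simpa using Nat.sq_sub_sq (Fintype.card F) 1, mul_right_comm] at h
  have := Nat.le_of_mul_le_mul_right h hF
  omega

end Pencil

section AffinePlane

variable {F : Type*} [Field F] [Fintype F]

lemma card_zeros_mul_le {a b : MvPolynomial (Fin 3) F} {d : ℕ} (hab : (a * b).IsHomogeneous d)
    (ha : ¬ IsUnit a) (hb : ¬ IsUnit b) (hinf : ∀ v ≠ 0, v 0 = 0 → eval v (a * b) ≠ 0)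
    {Z : Finset (Fin 3 → F)} (hZ : ∀ x ∈ Z, x 0 = 1 ∧ eval x (a * b) = 0) :
    Z.card ≤ 2 + (Fintype.card F + 1) * (d - 2) := by
  classical
  have hne : a * b ≠ 0 := fun h => hinf ![0, 0, 1] (by simp) (by simp) (by simp [h])
  have hdeg : a.totalDegree + b.totalDegree = d := by
    rw [← totalDegree_mul_of_isDomain (left_ne_zero_of_mul hne) (right_ne_zero_of_mul hne),
      hab.totalDegree hne]
  have line_ne_zero (x v : Fin 3 → F) (hv : v 0 = 0) (hv0 : v ≠ 0) :
      lineRestriction x v a * lineRestriction x v b ≠ 0 := by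
    intro h
    refine hinf v hv0 hv ?_
    rw [← coeff_lineRestriction x v hab, map_mul, h, Polynomial.coeff_zero]
  have card_factor (p : MvPolynomial (Fin 3) F)
      (hp : ∀ x v : Fin 3 → F, v 0 = 0 → v ≠ 0 → lineRestriction x v p ≠ 0) :
      (Z.filter (eval · p = 0)).card ≤ 1 + (Fintype.card F + 1) * (p.totalDegree - 1) := by
    refine card_zeros_le_of_finrank_eq_two le_rfl (finrank_ker_proj (0 : Fin 3))
      (fun x hx => (Finset.mem_filter.mp hx).2) (fun x hx y hy => ?_) fun x _ => hp x
    simp [(hZ x (Finset.mem_filter.mp hx).1).1, (hZ y (Finset.mem_filter.mp hy).1).1]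
  have hcover : Z ⊆ Z.filter (eval · a = 0) ∪ Z.filter (eval · b = 0) := fun x hx => by
    simpa [hx] using (hZ x hx).2
  have hapos := totalDegree_pos_of_not_isUnit (left_ne_zero_of_mul hne) ha
  have hbpos := totalDegree_pos_of_not_isUnit (right_ne_zero_of_mul hne) hb
  calc Z.card ≤ (Z.filter (eval · a = 0)).card + (Z.filter (eval · b = 0)).card :=
        (Finset.card_le_card hcover).trans (Finset.card_union_le _ _)
    _ ≤ (1 + (Fintype.card F + 1) * (a.totalDegree - 1)) +
          (1 + (Fintype.card F + 1) * (b.totalDegree - 1)) :=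
        add_le_add
          (card_factor a fun x v hv hv0 => left_ne_zero_of_mul (line_ne_zero x v hv hv0))
          (card_factor b fun x v hv hv0 => right_ne_zero_of_mul (line_ne_zero x v hv hv0))
    _ = 2 + (Fintype.card F + 1) * (d - 2) := by
        rw [add_add_add_comm, ← mul_add]
        congr 2
        omega

lemma card_affine_zeros_lt {q : ℕ} (hq : 2 < q) (hF : Fintype.card F = q ^ 2)
    {f : MvPolynomial (Fin 3) F} (hf : f.IsHomogeneous (q + 1))
    (hinf : ∀ v ≠ 0, v 0 = 0 → eval v f ≠ 0)
    {Z : Finset (Fin 3 → F)} (hZ : ∀ x ∈ Z, x 0 = 1 ∧ eval x f = 0) : Z.card < q ^ 3 := by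
  by_cases hirr : Irreducible f
  · have hd : ((q + 1 : ℕ) : F) ≠ 0 := by
      have hq0 : (q : F) ^ 2 = 0 := by exact_mod_cast hF ▸ Nat.cast_card_eq_zero F
      simp [pow_eq_zero_iff two_ne_zero |>.mp hq0]
    have h := two_mul_card_le_of_irreducible hf hirr hd hinf Z hZ
    rw [hF, Nat.add_sub_cancel] at h
    nlinarith
  · obtain ⟨a, b, rfl, ha, hb⟩ : ∃ a b, f = a * b ∧ ¬ IsUnit a ∧ ¬ IsUnit b := by
      have hf0 : f ≠ 0 := fun h => hinf ![0, 0, 1] (by simp) (by simp) (by simp [h])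
      have hunit : ¬ IsUnit f := fun h => by
        simpa [hf.totalDegree hf0] using (isUnit_iff_totalDegree_of_isReduced.mp h).2
      simpa [irreducible_iff, hunit] using hirr
    have h := card_zeros_mul_le hf ha hb hinf hZ
    obtain ⟨n, rfl⟩ := Nat.exists_eq_add_of_lt hq
    rw [hF, show 2 + n + 1 + 1 - 2 = n + 2 by omega] at h
    nlinarith

end AffinePlane

section Translates

lemma exists_isHomogeneous_eval_linearMap {σ τ F : Type*} [Finite τ] [CommSemiring F]
    {f : MvPolynomial σ F} {d : ℕ} (hf : f.IsHomogeneous d) (L : (τ → F) →ₗ[F] σ → F) :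
    ∃ g : MvPolynomial τ F, g.IsHomogeneous d ∧ ∀ x, eval x g = eval (L x) f := by
  classical
  have := Fintype.ofFinite τ
  let coord (i : σ) : MvPolynomial τ F := ∑ j, C (L (Pi.single j 1) i) * X j
  have isHomogeneous_coord (i : σ) : (coord i).IsHomogeneous 1 :=
    IsHomogeneous.sum _ _ _ fun j _ => (isHomogeneous_X F j).C_mul _
  refine ⟨aeval coord f, by simpa using hf.aeval coord isHomogeneous_coord, fun x => ?_⟩
  have hL : L x = fun i => eval x (coord i) := by
    conv_lhs => rw [pi_eq_sum_univ' x, map_sum]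
    ext i
    simp [coord, mul_comm]
  rw [hL, aeval_eq_bind₁]
  exact eval₂Hom_bind₁ _ _ _ _

lemma card_mul_card_le_of_card_translate_le {V : Type*} [AddCommGroup V] {U : AddSubgroup V}
    [Finite U] {O Y : Finset V} (hYO : ∀ y ∈ Y, ∀ u ∈ U, y - u ∈ O) {N : ℕ}
    (hN : ∀ c ∈ O, {u : U | c + (u : V) ∈ Y}.ncard ≤ N) : Nat.card U * Y.card ≤ O.card * N := by
  classical
  have := Fintype.ofFinite U
  rw [Nat.card_eq_fintype_card]
  refine Finset.card_mul_le_card_mul (fun (u : U) c => c + (u : V) ∈ Y) (fun u _ => ?_)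
    fun c hc => ?_
  · exact Finset.card_le_card_of_injOn (· - (u : V))
      (fun y hy => by simpa [Finset.bipartiteAbove, Finset.mem_coe.mp hy] using hYO y hy u u.2)
      fun y _ z _ h => sub_left_injective h
  · rw [Finset.bipartiteBelow, ← Set.ncard_coe_finset]
    simpa using hN c hc

variable {σ F : Type*} [Finite σ] [Field F] [Fintype F] {q : ℕ} {f : MvPolynomial σ F}

lemma ncard_zeros_translate_lt (hq : 2 < q) (hF : Fintype.card F = q ^ 2)
    (hf : f.IsHomogeneous (q + 1)) {U : Submodule F (σ → F)} (hU : finrank F U = 2)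
    (hext : ∀ u ∈ U, u ≠ 0 → eval u f ≠ 0) (c : σ → F) :
    {u : U | eval (c + (u : σ → F)) f = 0}.ncard < q ^ 3 := by
  classical
  have := Fintype.ofFinite U
  let b := finBasisOfFinrankEq F U hU
  let L : (Fin 3 → F) →ₗ[F] σ → F := (LinearMap.proj 0).smulRight c +
    U.subtype ∘ₗ b.equivFun.symm.toLinearMap ∘ₗ LinearMap.funLeft F F Fin.succ
  have hL (x : Fin 3 → F) : L x = x 0 • c + (b.equivFun.symm (Fin.tail x) : σ → F) := rfl
  obtain ⟨g, hg, hgf⟩ := exists_isHomogeneous_eval_linearMap hf L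
  have hinf (v : Fin 3 → F) (hv : v ≠ 0) (hv0 : v 0 = 0) : eval v g ≠ 0 := by
    rw [hgf, hL, hv0, zero_smul, zero_add]
    refine hext _ (Subtype.coe_prop _) fun h => hv ?_
    have htail : Fin.tail v = 0 := b.equivFun.symm.map_eq_zero_iff.mp (Submodule.coe_eq_zero.mp h)
    exact funext (Fin.cases hv0 (congrFun htail))
  let chart : U → Fin 3 → F := fun u => Fin.cons 1 (b.equivFun u)
  have hchart : Function.Injective chart := fun u v h =>
    b.equivFun.injective (Fin.cons_right_injective (α := fun _ : Fin 3 => F) 1 h)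
  rw [← Finset.coe_filter_univ, Set.ncard_coe_finset, ← Finset.card_image_of_injective _ hchart]
  refine card_affine_zeros_lt hq hF hg hinf fun x hx => ?_
  obtain ⟨u, hu, rfl⟩ := Finset.mem_image.mp hx
  refine ⟨rfl, ?_⟩
  rw [hgf, hL]
  simpa [chart] using hu

lemma exists_ne_zero_eval_eq_zero_of_finrank_eq_two (hq : 2 < q) (hF : Fintype.card F = q ^ 2)
    (hf : f.IsHomogeneous (q + 1)) {W : Submodule F (σ → F)} (hW : W ≠ ⊤)
    (hdense : {v | v ∉ W}.ncard ≤ q * {v | v ∉ W ∧ eval v f = 0}.ncard)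
    {U : Submodule F (σ → F)} (hUW : U ≤ W) (hU : finrank F U = 2) :
    ∃ u ∈ U, u ≠ 0 ∧ eval u f = 0 := by
  classical
  have := Fintype.ofFinite σ
  by_contra! hext
  let O : Finset (σ → F) := {v | v ∉ W}
  let Y : Finset (σ → F) := {v | v ∉ W ∧ eval v f = 0}
  have hO : 0 < O.card := by
    obtain ⟨v, hv⟩ := SetLike.exists_not_mem_of_ne_top W hW
    exact Finset.card_pos.mpr ⟨v, by simpa [O] using hv⟩
  have hOY : O.card ≤ q * Y.card := by
    simpa [O, Y, ← Set.ncard_coe_finset] using hdense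
  have hcount : Nat.card U.toAddSubgroup * Y.card ≤ O.card * (q ^ 3 - 1) := by
    refine card_mul_card_le_of_card_translate_le (fun y hy u hu => ?_) fun c _ => ?_
    · have hyW : y ∉ W := (Finset.mem_filter.mp hy).2.1
      simpa [O, W.sub_mem_iff_left (hUW hu)] using hyW
    · refine (Set.ncard_le_ncard fun u hu => ?_).trans
        (Nat.le_sub_one_of_lt (ncard_zeros_translate_lt hq hF hf hU hext c))
      exact (Finset.mem_filter.mp hu).2.2
  have hcardU : Nat.card U.toAddSubgroup = q ^ 4 := by
    calc Nat.card U.toAddSubgroup = Nat.card F ^ finrank F U := natCard_eq_pow_finrank (V := U)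
      _ = q ^ 4 := by rw [hU, Nat.card_eq_fintype_card, hF, ← pow_mul]
  rw [hcardU] at hcount
  have hlt : O.card * (q ^ 3 - 1) < O.card * q ^ 3 :=
    Nat.mul_lt_mul_of_pos_left (Nat.sub_one_lt (by positivity)) hO
  nlinarith [Nat.mul_le_mul_left (q ^ 3) hOY]

end Translates

section BoseBurton

variable {K V : Type*} [Field K] [AddCommGroup V] [Module K V]

lemma exists_add_smul_eq_of_forall_finrank_eq_two {C : Set V}
    (hsmul : ∀ (a : K), ∀ v ∈ C, a • v ∈ C) (h0 : (0 : V) ∈ C)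
    (hline : ∀ U : Submodule K V, finrank K U = 2 → ∃ u ∈ U, u ≠ 0 ∧ u ∈ C) {r : V} (hr : r ∉ C)
    (v : V) : ∃ c ∈ C, ∃ s : K, c + s • r = v := by
  have hr0 : r ≠ 0 := fun h => hr (h ▸ h0)
  by_cases hv : ∃ a : K, a • r = v
  · obtain ⟨a, rfl⟩ := hv
    exact ⟨0, h0, a, zero_add _⟩
  · have hli : LinearIndependent K ![r, v] :=
      (LinearIndependent.pair_iff' hr0).mpr (not_exists.mp hv)
    have hspan : finrank K (Submodule.span K {r, v}) = 2 := by
      rw [← Matrix.range_cons_cons_empty r v ![]]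
      exact finrank_span_eq_card hli
    obtain ⟨u, hu, hu0, huC⟩ := hline _ hspan
    obtain ⟨a, b, rfl⟩ := Submodule.mem_span_pair.mp hu
    have hb : b ≠ 0 := by
      rintro rfl
      have ha : a ≠ 0 := fun ha => hu0 (by simp [ha])
      exact hr (by simpa [ha] using hsmul a⁻¹ _ huC)
    refine ⟨_, hsmul b⁻¹ _ huC, -(b⁻¹ * a), ?_⟩
    rw [smul_add, smul_smul, smul_smul, inv_mul_cancel₀ hb, one_smul, neg_smul]
    abel

/-- The theorem of Bose and Burton: by counting, projection from a point `r ∉ C` gives a bijection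
`C × K → V`, whereas for `r = u + w` with `u, w ∈ C` it would send `(u, 0)` and `(-w, 1)` to `u`. -/
lemma exists_submodule_coe_eq_of_forall_finrank_eq_two [Finite K] [Finite V] {C : Set V}
    (hsmul : ∀ (a : K), ∀ v ∈ C, a • v ∈ C) (h0 : (0 : V) ∈ C)
    (hline : ∀ U : Submodule K V, finrank K U = 2 → ∃ u ∈ U, u ≠ 0 ∧ u ∈ C)
    (hcard : Nat.card C * Nat.card K ≤ Nat.card V) :
    ∃ H : Submodule K V, (H : Set V) = C ∧ finrank K H + 1 = finrank K V := by
  have two_le_card : 2 ≤ Nat.card K := Nat.succ_le_of_lt Finite.one_lt_card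
  have project_bijective {r : V} (hr : r ∉ C) :
      Function.Bijective fun x : C × K => (x.1 : V) + x.2 • r := by
    have hsurj : Function.Surjective fun x : C × K => (x.1 : V) + x.2 • r := fun v => by
      obtain ⟨c, hc, s, h⟩ := exists_add_smul_eq_of_forall_finrank_eq_two hsmul h0 hline hr v
      exact ⟨(⟨c, hc⟩, s), h⟩
    refine (Nat.bijective_iff_surjective_and_card _).mpr ⟨hsurj, le_antisymm ?_ ?_⟩
    · rwa [Nat.card_prod]
    · exact Nat.card_le_card_of_surjective _ hsurj
  have add_mem {u w : V} (hu : u ∈ C) (hw : w ∈ C) : u + w ∈ C := by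
    by_contra hr
    have hneg : -w ∈ C := by simpa using hsmul (-1) w hw
    have h := (project_bijective hr).1 (a₁ := (⟨u, hu⟩, 0)) (a₂ := (⟨-w, hneg⟩, 1)) (by simp)
    exact zero_ne_one (congrArg Prod.snd h)
  let H : Submodule K V :=
    { carrier := C, add_mem' := add_mem, zero_mem' := h0, smul_mem' := fun a v hv => hsmul a v hv }
  obtain ⟨r, hr⟩ : ∃ r, r ∉ C := by
    by_contra! hC
    rw [Set.eq_univ_of_forall hC, Nat.card_univ] at hcard
    nlinarith [Nat.card_pos (α := V)]
  refine ⟨H, rfl, Nat.pow_right_injective two_le_card ?_⟩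
  have hH : Nat.card C = Nat.card K ^ finrank K H := natCard_eq_pow_finrank (V := H)
  have hV := Nat.card_congr (Equiv.ofBijective _ (project_bijective hr))
  rwa [Nat.card_prod, hH, natCard_eq_pow_finrank (K := K) (V := V), ← pow_succ] at hV

end BoseBurton

section Cones

lemma ncard_ne_zero_and_mem_cone {K V : Type*} [Field K] [Fintype K] [AddCommGroup V] [Module K V]
    {C : Set V} (hC : ∀ a : K, a ≠ 0 → ∀ v ∈ C, a • v ∈ C) :
    {v | v ≠ 0 ∧ v ∈ C}.ncard =
      {P : Projectivization K V | P.rep ∈ C}.ncard * (Fintype.card K - 1) := by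
  classical
  rw [← Fintype.card_units, ← Nat.card_eq_fintype_card, ← Set.ncard_univ, ← Set.ncard_prod]
  refine (Set.ncard_congr (fun x _ => (x.2 : K) • x.1.rep) ?_ ?_ ?_).symm
  · rintro ⟨P, a⟩ ⟨hP, -⟩
    exact ⟨smul_ne_zero a.ne_zero P.rep_nonzero, hC a a.ne_zero _ hP⟩
  · rintro ⟨P, a⟩ ⟨R, b⟩ - - (h : (a : K) • P.rep = (b : K) • R.rep)
    obtain rfl : P = R := by
      rw [← P.mk_rep, ← R.mk_rep, Projectivization.mk_eq_mk_iff]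
      exact ⟨a⁻¹ * b, by rw [mul_smul, inv_smul_eq_iff]; exact h.symm⟩
    rw [Units.ext (smul_left_injective K P.rep_nonzero h)]
  · rintro v ⟨hv, hvC⟩
    obtain ⟨a, ha⟩ := Projectivization.exists_smul_eq_mk_rep K v hv
    have hrep : (Projectivization.mk K v hv).rep ∈ C := by
      rw [← ha]
      exact hC a a.ne_zero v hvC
    exact ⟨(Projectivization.mk K v hv, a⁻¹), ⟨hrep, Set.mem_univ _⟩,
      by simp [← ha, Units.smul_def, smul_smul]⟩

variable {F : Type} [Field F] {n : ℕ} {f : MvPolynomial (Fin n) F} {d : ℕ}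

lemma ncard_notMem_submodule {K V : Type*} [Field K] [Fintype K] [AddCommGroup V] [Module K V]
    [Finite V] {W : Submodule K V} {m : ℕ} (hm : finrank K V = finrank K W + m) :
    {v | v ∉ W}.ncard = Fintype.card K ^ finrank K W *
      (∑ i ∈ Finset.range m, Fintype.card K ^ i) * (Fintype.card K - 1) := by
  have h : {v | v ∉ W}.ncard = Nat.card V - Nat.card W := Set.ncard_compl (W : Set V)
  rw [h, natCard_eq_pow_finrank (K := K) (V := V), natCard_eq_pow_finrank (K := K) (V := W), hm,
    Nat.card_eq_fintype_card, pow_add, mul_assoc,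
    geom_sum_mul_of_one_le Fintype.card_pos, Nat.mul_sub_one]

lemma mem_projPts_iff {W : Submodule F (Fin n → F)} {P : Projectivization F (Fin n → F)} :
    P ∈ projPts W ↔ P.rep ∈ W := by
  rw [projPts, Set.mem_ofPred_eq, Projectivization.submodule_eq,
    Submodule.span_singleton_le_iff_mem]

variable [Fintype F]

lemma ncard_zeros_notMem (hf : f.IsHomogeneous d) (W : Submodule F (Fin n → F)) :
    {v | v ∉ W ∧ eval v f = 0}.ncard =
      (hypersurfacePts f \ projPts W).ncard * (Fintype.card F - 1) := by
  convert ncard_ne_zero_and_mem_cone (C := {v | v ∉ W ∧ eval v f = 0}) fun a ha v hv =>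
    ⟨(W.smul_mem_iff ha).not.mpr hv.1,
      (eval_smul_of_isHomogeneous hf a v).trans (mul_eq_zero_of_right _ hv.2)⟩ using 2
  · ext v
    exact ⟨fun h => ⟨fun h0 => h.1 (h0 ▸ W.zero_mem), h⟩, And.right⟩
  · congr 1
    ext P
    exact and_comm.trans (and_congr_left' mem_projPts_iff.not)

lemma ncard_zeros_mem (hf : f.IsHomogeneous (d + 1)) (W : Submodule F (Fin n → F)) :
    {v | v ∈ W ∧ eval v f = 0}.ncard =
      (hypersurfacePts f ∩ projPts W).ncard * (Fintype.card F - 1) + 1 := by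
  have h0 : eval (0 : Fin n → F) f = 0 := by
    simpa using eval_smul_of_isHomogeneous hf 0 0
  have hcone := ncard_ne_zero_and_mem_cone (C := {v | v ∈ W ∧ eval v f = 0}) fun a _ v hv =>
    ⟨W.smul_mem a hv.1, (eval_smul_of_isHomogeneous hf a v).trans (mul_eq_zero_of_right _ hv.2)⟩
  have hpts : {P : Projectivization F (Fin n → F) | P.rep ∈ {v | v ∈ W ∧ eval v f = 0}} =
      hypersurfacePts f ∩ projPts W := by
    ext P
    exact and_comm.trans (and_congr_right' mem_projPts_iff.symm)
  have hzero_mem : (0 : Fin n → F) ∈ {v | v ∈ W ∧ eval v f = 0} := ⟨W.zero_mem, h0⟩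
  rw [← hpts, ← hcone, ← Set.ncard_sdiff_singleton_add_one hzero_mem]
  congr 2
  ext v
  exact and_comm

end Cones

section LinearSection

lemma exists_submodule_mem_iff_eval_eq_zero {F σ : Type*} [Field F] [Fintype F] [Finite σ]
    {q k : ℕ} (hq : 2 < q) (hF : Fintype.card F = q ^ 2) {f : MvPolynomial σ F}
    (hf : f.IsHomogeneous (q + 1)) {W : Submodule F (σ → F)} (hWtop : W ≠ ⊤)
    (hdense : {v | v ∉ W}.ncard ≤ q * {v | v ∉ W ∧ eval v f = 0}.ncard)
    (hW : finrank F W = k + 1) (hfew : {v | v ∈ W ∧ eval v f = 0}.ncard ≤ Fintype.card F ^ k) :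
    ∃ V : Submodule F (σ → F), (∀ v, v ∈ V ↔ v ∈ W ∧ eval v f = 0) ∧ finrank F V = k := by
  let C : Set W := {w | eval (w : σ → F) f = 0}
  have hsmul (a : F) (w : W) (hw : w ∈ C) : a • w ∈ C :=
    (eval_smul_of_isHomogeneous hf a _).trans (mul_eq_zero_of_right _ hw)
  have h0 : (0 : W) ∈ C := by
    simpa [C] using eval_smul_of_isHomogeneous hf 0 0
  have hline (U : Submodule F W) (hU : finrank F U = 2) : ∃ u ∈ U, u ≠ 0 ∧ u ∈ C := by
    obtain ⟨_, ⟨w, hw, rfl⟩, hw0, hfw⟩ :=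
      exists_ne_zero_eval_eq_zero_of_finrank_eq_two hq hF hf hWtop hdense
        (Submodule.map_subtype_le W U) (by rwa [Submodule.finrank_map_subtype_eq])
    exact ⟨w, hw, fun h => hw0 (by simp [h]), hfw⟩
  have hcard : Nat.card C * Nat.card F ≤ Nat.card W := by
    rw [natCard_eq_pow_finrank (K := F) (V := W), hW, pow_succ, Nat.card_eq_fintype_card (α := F)]
    refine Nat.mul_le_mul_right _ (le_of_eq_of_le ?_ hfew)
    rw [Nat.card_coe_set_eq, ← Set.ncard_image_of_injective _ Subtype.val_injective]
    congr 1
    ext v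
    simp [C, and_comm]
  obtain ⟨H, hH, hrank⟩ : ∃ H : Submodule F W, (H : Set W) = C ∧ finrank F H + 1 = finrank F W :=
    exists_submodule_coe_eq_of_forall_finrank_eq_two hsmul h0 hline hcard
  refine ⟨H.map W.subtype, fun v => ?_, by rw [Submodule.finrank_map_subtype_eq]; lia⟩
  have hmem (w : W) : w ∈ H ↔ eval (w : σ → F) f = 0 := Set.ext_iff.mp hH w
  simp [hmem, and_comm]

end LinearSection

theorem stmt_8_general {F : Type} [Field F] [Fintype F] {q n k m : ℕ} (hq : 2 < q)
    (hF : Fintype.card F = q ^ 2) (hn : n = k + 1 + m) (hm : 0 < m) {f : MvPolynomial (Fin n) F}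
    (hf : f.IsHomogeneous (q + 1)) {W : Submodule F (Fin n → F)} (hW : finrank F W = k + 1)
    (hout : q ^ (2 * k + 1) * ∑ i ∈ Finset.range m, (q ^ 2) ^ i ≤
      (hypersurfacePts f \ projPts W).ncard)
    (hint : (hypersurfacePts f ∩ projPts W).ncard ≤ ∑ i ∈ Finset.range k, (q ^ 2) ^ i) :
    ∃ V : Submodule F (Fin n → F), finrank F V = k ∧
      hypersurfacePts f ∩ projPts W = projPts V := by
  have hrank : finrank F (Fin n → F) = finrank F W + m := by rw [finrank_fin_fun, hW, hn]
  have hWtop : W ≠ ⊤ := by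
    rintro rfl
    rw [finrank_top] at hrank
    lia
  have hdense : {v | v ∉ W}.ncard ≤ q * {v | v ∉ W ∧ eval v f = 0}.ncard := by
    rw [ncard_notMem_submodule hrank, ncard_zeros_notMem hf, hW, hF]
    calc (q ^ 2) ^ (k + 1) * (∑ i ∈ Finset.range m, (q ^ 2) ^ i) * (q ^ 2 - 1)
        = q * (q ^ (2 * k + 1) * (∑ i ∈ Finset.range m, (q ^ 2) ^ i) * (q ^ 2 - 1)) := by ring
      _ ≤ _ := by gcongr
  have hfew : {v | v ∈ W ∧ eval v f = 0}.ncard ≤ (q ^ 2) ^ k := by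
    have hQ : 1 ≤ q ^ 2 := Nat.one_le_pow _ _ (by lia)
    calc {v | v ∈ W ∧ eval v f = 0}.ncard
        ≤ (∑ i ∈ Finset.range k, (q ^ 2) ^ i) * (q ^ 2 - 1) + 1 := by
          rw [ncard_zeros_mem hf, hF]
          gcongr
      _ = (q ^ 2) ^ k := by
        rw [geom_sum_mul_of_one_le hQ, Nat.sub_add_cancel (Nat.one_le_pow _ _ hQ)]
  obtain ⟨V, hV, hVrank⟩ :=
    exists_submodule_mem_iff_eval_eq_zero hq hF hf hWtop hdense hW (hF ▸ hfew)
  refine ⟨V, hVrank, ?_⟩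
  ext P
  rw [Set.mem_inter_iff, mem_projPts_iff, mem_projPts_iff, hV, and_comm]
  rfl

/-- Under the hypotheses of the main theorem, if a solid `Σ₃` meets `S` in exactly
`q⁴ + q² + 1` rational points, then `S ∩ Σ₃` is a plane. -/
theorem stmt_8 (q : ℕ) (hq : ∃ p k : ℕ, p.Prime ∧ 0 < k ∧ q = p ^ k) (hq2 : 2 < q)
    (F : Type) [Field F] [Fintype F] (hcardF : Fintype.card F = q ^ 2)
    (f : MvPolynomial (Fin 7) F) (hf0 : f ≠ 0) (hfdeg : f.IsHomogeneous (q + 1))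
    (S : Set (Projectivization F (Fin 7 → F))) (hS : S = hypersurfacePts f)
    (hnosolid : ¬ ∃ W : Submodule F (Fin 7 → F), Module.finrank F W = 4 ∧ projPts W ⊆ S)
    (hcardS : S.ncard = q ^ 11 + q ^ 9 + q ^ 7 + q ^ 4 + q ^ 2 + 1)
    (W₃ : Submodule F (Fin 7 → F)) (hW₃ : Module.finrank F W₃ = 4)
    (hint : (S ∩ projPts W₃).ncard = q ^ 4 + q ^ 2 + 1) :
    ∃ V : Submodule F (Fin 7 → F), Module.finrank F V = 3 ∧
      S ∩ projPts W₃ = projPts V := by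
  subst hS
  have hsplit := Set.ncard_inter_add_ncard_sdiff_eq_ncard (hypersurfacePts f) (projPts W₃)
  have hout : (hypersurfacePts f \ projPts W₃).ncard = q ^ 11 + q ^ 9 + q ^ 7 := by lia
  refine stmt_8_general (k := 3) (m := 3) hq2 hcardF rfl three_pos hfdeg hW₃
    (le_of_eq ?_) (le_of_eq ?_)
  · rw [hout, Finset.sum_range_succ, Finset.sum_range_succ, Finset.sum_range_one]
    ring
  · rw [hint, Finset.sum_range_succ, Finset.sum_range_succ, Finset.sum_range_one]
    ring
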